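/- arXiv:2305.09081 — 3 statements merged into one kernel-verified Lean document; each statement's English description precedes it below -/
import Mathlib

section
/- For every pair (d, d₁) ∈ {(6,8), (8,7), (14,5), (18,4), (22,0), (22,3)}, every c ∈ {1, 2, 4}, and all rational numbers a, b satisfying d·a² − 2·(12 − d₁)·a·b + 2·b² = −2 and d·a − (12 − d₁)·b = c, it is NOT the case that a ≥ 0 and 2a is an integer. -/
/-!
Put `e = 12 - d₁` and `m = 2a`. Eliminating `b` from the system leaves
`(e² - 2d)(d m² - 4 c m) = 8 (c² + e²)`, so if `m` is an integer then `e² - 2d` divides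
`8 (c² + e²)`. This fails for every pair except `(6, 8)`, where the equation becomes
`(3m + c)(m - c) = 16`, which has no solution in integers `m ≥ 0` and `c > 0`.
-/

section Elimination

variable {R : Type*} [CommRing R]

lemma quadratic_of_system {d e c a b : R}
    (h1 : d * a ^ 2 - 2 * e * a * b + 2 * b ^ 2 = -2) (h2 : d * a - e * b = c) :
    (e ^ 2 - 2 * d) * (d * (2 * a) ^ 2 - 4 * c * (2 * a)) = 8 * (c ^ 2 + e ^ 2) := by
  subst h2
  linear_combination (-4 * e ^ 2) * h1

lemma int_quadratic_of_system [CharZero R] {d e c m : ℤ} {a b : R}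
    (h1 : (d : R) * a ^ 2 - 2 * e * a * b + 2 * b ^ 2 = -2) (h2 : (d : R) * a - e * b = c)
    (hm : 2 * a = m) :
    (e ^ 2 - 2 * d) * (d * m ^ 2 - 4 * c * m) = 8 * (c ^ 2 + e ^ 2) := by
  have quadratic := quadratic_of_system h1 h2
  rw [hm] at quadratic
  exact_mod_cast quadratic

end Elimination

lemma three_mul_add_mul_sub_ne_sixteen {c m : ℤ} (hc : 0 < c) (hm : 0 ≤ m) :
    (3 * m + c) * (m - c) ≠ 16 := by
  intro h
  obtain ⟨n, rfl⟩ : ∃ n, m = c + n := ⟨m - c, by ring⟩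
  have h' : (3 * n + 4 * c) * n = 16 := by linear_combination h
  have factor_pos : 0 < 3 * n + 4 * c := by linarith
  have n_pos : 0 < n := pos_of_mul_pos_right (by linarith) factor_pos.le
  have n_lt : n < 3 := by nlinarith
  interval_cases n <;> omega

lemma not_sq_sub_two_mul_dvd_eight_mul_sq_add_sq :
    ∀ p ∈ ({(8, 7), (14, 5), (18, 4), (22, 0), (22, 3)} : Set (ℤ × ℤ)),
      ∀ c ∈ ({1, 2, 4} : Set ℤ),
        ¬ (12 - p.2) ^ 2 - 2 * p.1 ∣ 8 * (c ^ 2 + (12 - p.2) ^ 2) := by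
  simp only [Set.forall_mem_insert, Set.mem_singleton_iff, forall_eq]
  decide

theorem stmt_2_general {R : Type*} [CommRing R] [PartialOrder R] [IsStrictOrderedRing R]
    (d d₁ : R)
    (hdd₁ : (d, d₁) ∈ ({(6, 8), (8, 7), (14, 5), (18, 4), (22, 0), (22, 3)} : Set (R × R)))
    (c : R) (hc : c ∈ ({1, 2, 4} : Set R))
    (a b : R)
    (h1 : d * a ^ 2 - 2 * (12 - d₁) * a * b + 2 * b ^ 2 = -2)
    (h2 : d * a - (12 - d₁) * b = c) :
    ¬ (0 ≤ a ∧ ∃ m : ℤ, 2 * a = (m : R)) := by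
  rintro ⟨ha, m, hm⟩
  obtain ⟨⟨d, d₁⟩, pair_mem, ⟨⟩⟩ : (d, d₁) ∈ Prod.map Int.cast Int.cast ''
      ({(6, 8), (8, 7), (14, 5), (18, 4), (22, 0), (22, 3)} : Set (ℤ × ℤ)) := by
    simpa [Set.image_insert_eq] using hdd₁
  obtain ⟨c, c_mem, rfl⟩ : c ∈ Int.cast '' ({1, 2, 4} : Set ℤ) := by
    simpa [Set.image_insert_eq] using hc
  have quadratic : ((12 - d₁) ^ 2 - 2 * d) * (d * m ^ 2 - 4 * c * m) =
      8 * (c ^ 2 + (12 - d₁) ^ 2) :=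
    int_quadratic_of_system (by exact_mod_cast h1) (by exact_mod_cast h2) hm
  rcases pair_mem with ⟨⟨⟩⟩ | pair_mem
  · have m_nonneg : 0 ≤ m := Int.cast_nonneg_iff.mp (hm ▸ mul_nonneg zero_le_two ha)
    have c_pos : 0 < c := by rcases c_mem with rfl | rfl | rfl <;> norm_num
    exact three_mul_add_mul_sub_ne_sixteen c_pos m_nonneg (by linarith)
  · exact not_sq_sub_two_mul_dvd_eight_mul_sq_add_sq _ pair_mem c c_mem ⟨_, quadratic.symm⟩

/-- For each pair `(d, d₁)` in `{(6,8), (8,7), (14,5), (18,4), (22,0), (22,3)}`,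
each `c ∈ {1, 2, 4}`, and all rationals `a`, `b` with
`d·a² − 2·(12 − d₁)·a·b + 2·b² = −2` and `d·a − (12 − d₁)·b = c`,
it is not the case that `a ≥ 0` and `2a ∈ ℤ`. -/
theorem stmt_2 (d d₁ : ℚ)
    (hdd₁ : (d, d₁) ∈ ({(6, 8), (8, 7), (14, 5), (18, 4), (22, 0), (22, 3)} : Set (ℚ × ℚ)))
    (c : ℚ) (hc : c ∈ ({1, 2, 4} : Set ℚ))
    (a b : ℚ)
    (h1 : d * a ^ 2 - 2 * (12 - d₁) * a * b + 2 * b ^ 2 = -2)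
    (h2 : d * a - (12 - d₁) * b = c) :
    ¬ (0 ≤ a ∧ ∃ m : ℤ, 2 * a = (m : ℚ)) :=
  stmt_2_general d d₁ hdd₁ c hc a b h1 h2
end

section
/- Let L = {(6,20,8), (8,14,7), (14,5,5), (18,2,4), (22,0,0), (22,0,3)} and T = {(6,20), (8,14), (10,10), (12,7), (14,5), (16,3), (18,2), (22,0), (16,10), (24,5), (32,2), (40,0), (54,0), (64,0)}. Suppose (d, h, d₁) ∈ L, (e, t) ∈ T, g = h − t ≥ 0, d₂ is an integer with d₂ ≥ 1, and a, b are rational numbers with a ≥ 0 such that 2a and 2b are integers, and a, b are integers whenever d₁ ≠ 0, satisfying the three equations: d·a² − 2·(12 − d₁)·a·b + 2·b² = 2g − 2; d·a − (12 − d₁)·b = d₂ + 2 − 2g; and d = e − 2 + 2g − 2·d₂. Then (d, d₁, e, g, d₂, a, b) = (18, 4, 64, 2, 24, 3, 4) or (d, d₁, e, g, d₂, a, b) = (22, 3, 54, 0, 15, 2, 3). -/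
/-!
On the span of `-K` and `H₁` in the Picard group of `X₁`, the form `(D, D') ↦ -K · D · D'` has
Gram matrix with rows `(d, 12 - d₁)` and `(12 - d₁, 2)`, and the equations for `D₂` prescribe its
products with `-K` and with itself. Since `D₂ = a(-K) - b H₁`, the Gram determinant of `(-K, D₂)` is
`b²` times that of `(-K, H₁)`, so the product of these two determinants is a square. Moreover, if
`2a` is an integer, so is `2b (12 - d₁)`, which gives a divisibility between the determinants.
Only two pairs of table entries meet both conditions, and for each of them the quadratic equation
has a single root with `2a` integral.
-/

/-- Minus the determinant of the symmetric matrix with rows `(p, q)` and `(q, r)`; the sign makes it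
positive in the geometric situation, where the Hodge index theorem gives signature `(1, 1)`. -/
def gramDiscr {R : Type*} [CommRing R] (p q r : R) : R := q ^ 2 - p * r

section Gram

variable {R : Type*} [CommRing R] {p q r s k x y : R}

-- `s` and `k` are the products of `x v - y w` with `v` and with itself, for vectors `v`, `w` with
-- Gram matrix `(p, q; q, r)`.
theorem gramDiscr_eq_sq_mul (hs : p * x - q * y = s)
    (hk : p * x ^ 2 - 2 * q * x * y + r * y ^ 2 = k) :
    gramDiscr p s k = y ^ 2 * gramDiscr p q r := by
  subst hs hk
  unfold gramDiscr
  ring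

theorem isSquare_gramDiscr_mul (hs : p * x - q * y = s)
    (hk : p * x ^ 2 - 2 * q * x * y + r * y ^ 2 = k) :
    IsSquare (gramDiscr p q r * gramDiscr p s k) := by
  rw [gramDiscr_eq_sq_mul hs hk]
  exact ⟨y * gramDiscr p q r, by ring⟩

theorem gramDiscr_mul_sq (hs : p * x - q * y = s)
    (hk : p * x ^ 2 - 2 * q * x * y + r * y ^ 2 = k) :
    gramDiscr p q r * (p * x - s) ^ 2 = q ^ 2 * gramDiscr p s k := by
  rw [gramDiscr_eq_sq_mul hs hk, ← hs]
  ring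

end Gram

@[norm_cast]
theorem intCast_gramDiscr {R : Type*} [CommRing R] (p q r : ℤ) :
    ((gramDiscr p q r : ℤ) : R) = gramDiscr (p : R) q r := by
  simp only [gramDiscr, Int.cast_sub, Int.cast_pow, Int.cast_mul]

/-- The set `L` of triples `(d, h, d₁)`: anticanonical degree, `h^{1,2}` of a smoothing and
discriminant degree of the conic bundle `π₁`. -/
def conicBundleTriples : Finset (ℤ × ℤ × ℤ) :=
  {(6, 20, 8), (8, 14, 7), (14, 5, 5), (18, 2, 4), (22, 0, 0), (22, 0, 3)}

/-- The table `T` of pairs `(-K³, h^{1,2})` of smooth Fano threefolds of Picard rank 1 with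
`h^{1,2} ≤ 20`. -/
def fanoPairs : Finset (ℤ × ℤ) :=
  {(6, 20), (8, 14), (10, 10), (12, 7), (14, 5), (16, 3), (18, 2), (22, 0), (16, 10), (24, 5),
    (32, 2), (40, 0), (54, 0), (64, 0)}

/-- `gramDiscr` of `-K` and `H₁`. -/
def conicDiscr (d d₁ : ℤ) : ℤ := gramDiscr d (12 - d₁) 2

/-- `gramDiscr` of `-K` and `2D₂`, where `D₂` is the exceptional divisor of the blow up of a curve
of genus `g` in a threefold of degree `e`. The degree of the curve is eliminated, and `D₂` is
doubled to avoid the resulting denominator. -/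
def blowUpDiscr (d e g : ℤ) : ℤ := gramDiscr d (e + 2 - 2 * g - d) (8 * (g - 1))

theorem filter_isSquare_and_dvd_eq :
    (conicBundleTriples ×ˢ fanoPairs).filter (fun ((d, h, d₁), (e, t)) ↦
      IsSquare (conicDiscr d d₁ * blowUpDiscr d e (h - t)) ∧
        conicDiscr d d₁ ∣ (12 - d₁) ^ 2 * blowUpDiscr d e (h - t)) =
    {((18, 2, 4), (64, 0)), ((22, 0, 3), (54, 0))} := by
  decide +kernel

/-- The equations for the exceptional divisor `D₂ ∼ a(-K) - b H₁` of the blow up `π₂` of a curve of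
genus `g` and degree `d₂`: the values of `-K · D₂²` and `K² · D₂`, and the anticanonical degree of
the blow up. -/
structure LinkEquations (d d₁ e g d₂ : ℤ) (a b : ℚ) : Prop where
  self_product : (d : ℚ) * a ^ 2 - 2 * (12 - (d₁ : ℚ)) * a * b + 2 * b ^ 2 = 2 * (g : ℚ) - 2
  degree : (d : ℚ) * a - (12 - (d₁ : ℚ)) * b = (d₂ : ℚ) + 2 - 2 * (g : ℚ)
  blowUp_degree : d = e - 2 + 2 * g - 2 * d₂

namespace LinkEquations

variable {d d₁ e g d₂ : ℤ} {a b : ℚ}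

theorem doubled_self_product (H : LinkEquations d d₁ e g d₂ a b) :
    (d : ℚ) * (2 * a) ^ 2 - 2 * (12 - d₁ : ℤ) * (2 * a) * (2 * b) + (2 : ℤ) * (2 * b) ^ 2 =
      (8 * (g - 1) : ℤ) := by
  push_cast
  linear_combination 4 * H.self_product

theorem doubled_degree (H : LinkEquations d d₁ e g d₂ a b) :
    (d : ℚ) * (2 * a) - (12 - d₁ : ℤ) * (2 * b) = (e + 2 - 2 * g - d : ℤ) := by
  have hd₂ : (d : ℚ) = e - 2 + 2 * g - 2 * d₂ := mod_cast H.blowUp_degree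
  push_cast
  linear_combination 2 * H.degree + hd₂

theorem isSquare_discr (H : LinkEquations d d₁ e g d₂ a b) :
    IsSquare (conicDiscr d d₁ * blowUpDiscr d e g) := by
  rw [← Rat.isSquare_intCast_iff]
  simpa only [conicDiscr, blowUpDiscr, Int.cast_mul, intCast_gramDiscr] using
    isSquare_gramDiscr_mul H.doubled_degree H.doubled_self_product

theorem conicDiscr_mul_sq (H : LinkEquations d d₁ e g d₂ a b) {m : ℤ} (hm : 2 * a = m) :
    conicDiscr d d₁ * (d * m - (e + 2 - 2 * g - d)) ^ 2 = (12 - d₁) ^ 2 * blowUpDiscr d e g := by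
  have hsq := gramDiscr_mul_sq H.doubled_degree H.doubled_self_product
  rw [hm] at hsq
  exact mod_cast hsq

theorem eq_of_link11 (H : LinkEquations 18 4 64 2 d₂ a b) {m : ℤ} (hm : 2 * a = m) :
    d₂ = 24 ∧ a = 3 ∧ b = 4 := by
  have hsq : (18 * m - 44) ^ 2 = 64 ^ 2 := by
    have : 28 * (18 * m - 44) ^ 2 = 8 ^ 2 * 1792 := H.conicDiscr_mul_sq hm
    linarith
  have hm6 : m = 6 := by
    rcases sq_eq_sq_iff_eq_or_eq_neg.mp hsq with h | h <;> omega
  have ha : a = 3 := by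
    rw [hm6, Int.cast_ofNat] at hm
    linarith
  have hdeg := H.doubled_degree
  push_cast [ha] at hdeg
  exact ⟨by linarith [H.blowUp_degree], ha, by linarith⟩

theorem eq_of_link14 (H : LinkEquations 22 3 54 0 d₂ a b) {m : ℤ} (hm : 2 * a = m) :
    d₂ = 15 ∧ a = 2 ∧ b = 3 := by
  have hsq : (22 * m - 34) ^ 2 = 54 ^ 2 := by
    have : 37 * (22 * m - 34) ^ 2 = 9 ^ 2 * 1332 := H.conicDiscr_mul_sq hm
    linarith
  have hm4 : m = 4 := by
    rcases sq_eq_sq_iff_eq_or_eq_neg.mp hsq with h | h <;> omega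
  have ha : a = 2 := by
    rw [hm4, Int.cast_ofNat] at hm
    linarith
  have hdeg := H.doubled_degree
  push_cast [ha] at hdeg
  exact ⟨by linarith [H.blowUp_degree], ha, by linarith⟩

end LinkEquations

theorem stmt_3_general {d h d₁ e t g d₂ : ℤ} {a b : ℚ}
    (hL : (d, h, d₁) ∈ conicBundleTriples) (hT : (e, t) ∈ fanoPairs) (hg : g = h - t)
    (H : LinkEquations d d₁ e g d₂ a b) (ha : ∃ m : ℤ, 2 * a = m) :
    (d = 18 ∧ d₁ = 4 ∧ e = 64 ∧ g = 2 ∧ d₂ = 24 ∧ a = 3 ∧ b = 4) ∨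
    (d = 22 ∧ d₁ = 3 ∧ e = 54 ∧ g = 0 ∧ d₂ = 15 ∧ a = 2 ∧ b = 3) := by
  subst hg
  obtain ⟨m, hm⟩ := ha
  have hdvd : conicDiscr d d₁ ∣ (12 - d₁) ^ 2 * blowUpDiscr d e (h - t) :=
    Dvd.intro _ (H.conicDiscr_mul_sq hm)
  have hmem := filter_isSquare_and_dvd_eq.subset <| Finset.mem_filter.mpr
    ⟨Finset.mk_mem_product hL hT, H.isSquare_discr, hdvd⟩
  simp only [Finset.mem_insert, Finset.mem_singleton, Prod.mk.injEq] at hmem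
  rcases hmem with ⟨⟨rfl, rfl, rfl⟩, rfl, rfl⟩ | ⟨⟨rfl, rfl, rfl⟩, rfl, rfl⟩
  · exact .inl ⟨rfl, rfl, rfl, rfl, H.eq_of_link11 hm⟩
  · exact .inr ⟨rfl, rfl, rfl, rfl, H.eq_of_link14 hm⟩

/-- The arithmetic case analysis for the birational contraction `π₂`: solving the system
of three equations for each triple in `L` and each pair in `T` yields exactly the data of
the Sarkisov links 11 and 14. -/
theorem stmt_3 (d h d₁ : ℤ)
    (hL : (d, h, d₁) ∈ ({(6, 20, 8), (8, 14, 7), (14, 5, 5), (18, 2, 4),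
      (22, 0, 0), (22, 0, 3)} : Set (ℤ × ℤ × ℤ)))
    (e t : ℤ)
    (hT : (e, t) ∈ ({(6, 20), (8, 14), (10, 10), (12, 7), (14, 5), (16, 3),
      (18, 2), (22, 0), (16, 10), (24, 5), (32, 2), (40, 0), (54, 0),
      (64, 0)} : Set (ℤ × ℤ)))
    (g : ℤ) (hg : g = h - t) (hg0 : 0 ≤ g)
    (d₂ : ℤ) (hd₂ : 1 ≤ d₂)
    (a b : ℚ) (ha0 : 0 ≤ a)
    (ha : ∃ m : ℤ, 2 * a = (m : ℚ)) (hb : ∃ n : ℤ, 2 * b = (n : ℚ))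
    (hint : d₁ ≠ 0 → (∃ m : ℤ, a = (m : ℚ)) ∧ (∃ n : ℤ, b = (n : ℚ)))
    (h1 : (d : ℚ) * a ^ 2 - 2 * (12 - (d₁ : ℚ)) * a * b + 2 * b ^ 2
      = 2 * (g : ℚ) - 2)
    (h2 : (d : ℚ) * a - (12 - (d₁ : ℚ)) * b = (d₂ : ℚ) + 2 - 2 * (g : ℚ))
    (h3 : d = e - 2 + 2 * g - 2 * d₂) :
    (d = 18 ∧ d₁ = 4 ∧ e = 64 ∧ g = 2 ∧ d₂ = 24 ∧ a = 3 ∧ b = 4) ∨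
    (d = 22 ∧ d₁ = 3 ∧ e = 54 ∧ g = 0 ∧ d₂ = 15 ∧ a = 2 ∧ b = 3) :=
  stmt_3_general (by simpa [conicBundleTriples] using hL) (by simpa [fanoPairs] using hT) hg
    ⟨h1, h2, h3⟩ ha
end

section
/- For every pair (d, d₁) ∈ {(6,8), (8,7), (14,5), (18,4), (22,0), (22,3)}, every integer d₂ such that either d₂ = d₁ or both d₁ ∈ {0, 3} and d₂ ∈ {0, 3}, and all rational numbers a, b such that 2a and 2b are integers, and a, b are integers whenever d₁ ≠ 0, satisfying d·a² − 2·(12 − d₁)·a·b + 2·b² = 2 and d·a − (12 − d₁)·b = 12 − d₂, one of the following holds: (a, b) = (0, −1) and d₁ = d₂, or (d, d₁, d₂, a, b) = (14, 5, 5, 1, 1). -/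
/-!
The hypotheses are the intersection numbers `-K · D² = 2` and `K² · D = 12 - d₂` of
`D ∼ a (-K) - b H`, where `-K³ = d`, `K² · H = 12 - d₁ = e` and `-K · H² = 2`. If `d₂ = d₁`, then
`D` and `H` have the same intersection numbers with `-K`, so `D` is either `H` or its mirror image
`(2 e / d) (-K) - H` under the reflection fixing `-K`; the latter has `2 a` integral only for
`(d, d₁) = (14, 5)`. If `d₂ ≠ d₁`, integrality of `2 a` makes the discriminant `e² - 2 d` of the
intersection form divide `8 (e² - (12 - d₂)²) = ± 8 · 63`, but it is `100` or `37`.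
-/

/-- The pairs `(-K³, d₁)` of equation (♦): anticanonical degree of the threefold and degree of the
discriminant curve of its conic bundle. -/
def conicBundleDegrees : Set (ℤ × ℤ) :=
  {(6, 8), (8, 7), (14, 5), (18, 4), (22, 0), (22, 3)}

section Elimination

variable {R : Type*} [CommRing R]

theorem discrim_mul_eq_two_mul_sq_sub_sq {d e f a b : R}
    (h1 : d * a ^ 2 - 2 * e * a * b + 2 * b ^ 2 = 2) (h2 : d * a - e * b = f) :
    (e ^ 2 - 2 * d) * (a * (2 * f - d * a)) = 2 * (e ^ 2 - f ^ 2) := by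
  subst h2
  linear_combination e ^ 2 * h1

theorem eq_or_reflection_of_degree_eq [IsDomain R] {d e a b : R} (he : e ≠ 0)
    (hdisc : e ^ 2 - 2 * d ≠ 0)
    (h1 : d * a ^ 2 - 2 * e * a * b + 2 * b ^ 2 = 2) (h2 : d * a - e * b = e) :
    (a = 0 ∧ b = -1) ∨ (d * a = 2 * e ∧ b = 1) := by
  have hprod : a * (2 * e - d * a) = 0 := by
    have := discrim_mul_eq_two_mul_sq_sub_sq h1 h2
    rw [sub_self, mul_zero] at this
    exact (mul_eq_zero.mp this).resolve_left hdisc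
  rcases mul_eq_zero.mp hprod with ha | hda
  · exact .inl ⟨ha, mul_left_cancel₀ he (by linear_combination d * ha - h2)⟩
  · exact .inr ⟨(sub_eq_zero.mp hda).symm, mul_left_cancel₀ he (by linear_combination -hda - h2)⟩

theorem discrim_dvd_of_two_mul_eq_intCast [CharZero R] {d e f m : ℤ} {a b : R}
    (hm : 2 * a = m) (h1 : (d : R) * a ^ 2 - 2 * e * a * b + 2 * b ^ 2 = 2)
    (h2 : (d : R) * a - e * b = f) :
    e ^ 2 - 2 * d ∣ 8 * (e ^ 2 - f ^ 2) := by
  refine Dvd.intro (m * (4 * f - d * m)) (Int.cast_injective (α := R) ?_)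
  push_cast
  rw [← hm]
  linear_combination 4 * discrim_mul_eq_two_mul_sq_sub_sq h1 h2

end Elimination

section Degrees

variable {d d₁ : ℤ}

theorem twelve_sub_ne_zero_of_mem (h : (d, d₁) ∈ conicBundleDegrees) : 12 - d₁ ≠ 0 := by
  rcases h with h | h | h | h | h | h <;> obtain ⟨rfl, rfl⟩ := Prod.mk.inj h <;> norm_num

theorem discrim_ne_zero_of_mem (h : (d, d₁) ∈ conicBundleDegrees) :
    (12 - d₁) ^ 2 - 2 * d ≠ 0 := by
  rcases h with h | h | h | h | h | h <;> obtain ⟨rfl, rfl⟩ := Prod.mk.inj h <;> norm_num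

theorem eq_fourteen_five_of_dvd (h : (d, d₁) ∈ conicBundleDegrees) (hdvd : d ∣ 4 * (12 - d₁)) :
    d = 14 ∧ d₁ = 5 := by
  rcases h with h | h | h | h | h | h <;> obtain ⟨rfl, rfl⟩ := Prod.mk.inj h <;> omega

theorem eq_twentyTwo_of_mem (h : (d, d₁) ∈ conicBundleDegrees) (hd₁ : d₁ ∈ ({0, 3} : Set ℤ)) :
    d = 22 := by
  rcases hd₁ with rfl | rfl <;> simpa [conicBundleDegrees] using h

theorem eq_of_discrim_dvd {d₂ : ℤ} (h : (d, d₁) ∈ conicBundleDegrees)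
    (hd₁ : d₁ ∈ ({0, 3} : Set ℤ)) (hd₂ : d₂ ∈ ({0, 3} : Set ℤ))
    (hdvd : (12 - d₁) ^ 2 - 2 * d ∣ 8 * ((12 - d₁) ^ 2 - (12 - d₂) ^ 2)) : d₂ = d₁ := by
  obtain rfl := eq_twentyTwo_of_mem h hd₁
  rcases hd₁ with rfl | rfl <;> rcases hd₂ with rfl | rfl <;>
    first | rfl | norm_num at hdvd

end Degrees

theorem stmt_4_general {R : Type*} [CommRing R] [IsDomain R] [CharZero R] {d d₁ d₂ : ℤ}
    (hdd₁ : (d, d₁) ∈ conicBundleDegrees)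
    (hd₂ : d₂ = d₁ ∨ (d₁ ∈ ({0, 3} : Set ℤ) ∧ d₂ ∈ ({0, 3} : Set ℤ)))
    {a b : R} (ha : ∃ m : ℤ, 2 * a = m)
    (h1 : (d : R) * a ^ 2 - 2 * (12 - d₁) * a * b + 2 * b ^ 2 = 2)
    (h2 : (d : R) * a - (12 - d₁) * b = 12 - d₂) :
    ((a, b) = (0, -1) ∧ d₁ = d₂) ∨ (d = 14 ∧ d₁ = 5 ∧ d₂ = 5 ∧ a = 1 ∧ b = 1) := by
  obtain ⟨m, hm⟩ := ha
  have hdvd : (12 - d₁) ^ 2 - 2 * d ∣ 8 * ((12 - d₁) ^ 2 - (12 - d₂) ^ 2) :=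
    discrim_dvd_of_two_mul_eq_intCast hm (mod_cast h1) (mod_cast h2)
  obtain rfl : d₂ = d₁ :=
    hd₂.elim id fun ⟨hd₁, hd₂⟩ ↦ eq_of_discrim_dvd hdd₁ hd₁ hd₂ hdvd
  rcases eq_or_reflection_of_degree_eq (mod_cast twelve_sub_ne_zero_of_mem hdd₁)
    (mod_cast discrim_ne_zero_of_mem hdd₁) h1 h2 with ⟨rfl, rfl⟩ | ⟨hda, rfl⟩
  · exact .inl ⟨rfl, rfl⟩
  · have hdm : d * m = 4 * (12 - d₂) := by
      apply Int.cast_injective (α := R)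
      push_cast
      linear_combination 2 * hda - d * hm
    obtain ⟨rfl, rfl⟩ := eq_fourteen_five_of_dvd hdd₁ (Dvd.intro m hdm)
    have ha : a = 1 := by
      apply mul_left_cancel₀ (show (14 : R) ≠ 0 by norm_num)
      push_cast at hda
      linear_combination hda
    exact .inr ⟨rfl, rfl, rfl, ha, rfl⟩

/-- The arithmetic case analysis for two conic bundles: either `(a, b) = (0, −1)` with
`d₁ = d₂` (the flop composition is biregular), or `(d, d₁, d₂, a, b) = (14, 5, 5, 1, 1)`
(the Sarkisov link 7). -/
theorem stmt_4 (d d₁ : ℤ)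
    (hdd₁ : (d, d₁) ∈ ({(6, 8), (8, 7), (14, 5), (18, 4), (22, 0), (22, 3)} : Set (ℤ × ℤ)))
    (d₂ : ℤ)
    (hd₂ : d₂ = d₁ ∨ (d₁ ∈ ({0, 3} : Set ℤ) ∧ d₂ ∈ ({0, 3} : Set ℤ)))
    (a b : ℚ)
    (ha : ∃ m : ℤ, 2 * a = (m : ℚ)) (hb : ∃ n : ℤ, 2 * b = (n : ℚ))
    (hint : d₁ ≠ 0 → (∃ m : ℤ, a = (m : ℚ)) ∧ (∃ n : ℤ, b = (n : ℚ)))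
    (h1 : (d : ℚ) * a ^ 2 - 2 * (12 - (d₁ : ℚ)) * a * b + 2 * b ^ 2 = 2)
    (h2 : (d : ℚ) * a - (12 - (d₁ : ℚ)) * b = 12 - (d₂ : ℚ)) :
    ((a, b) = ((0 : ℚ), (-1 : ℚ)) ∧ d₁ = d₂) ∨
    (d = 14 ∧ d₁ = 5 ∧ d₂ = 5 ∧ a = 1 ∧ b = 1) :=
  stmt_4_general hdd₁ hd₂ ha h1 h2
end
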